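/- Let χ : L → M be an injective morphism of differential graded Lie algebras over a field K of characteristic 0 such that the induced map H^*(L) → H^*(M) is injective. Then the homotopy fibre TW(χ) = { (l, m(t,dt)) ∈ L × M[t,dt] : m(0,0) = 0, m(1,0) = χ(l) } is a homotopy abelian DGLA. -/

import Mathlib

/-!
Basic homotopical algebra of differential graded Lie algebras over a field of
characteristic zero, following [Iacono, "Deformations and obstructions of pairs (X,D)"].

A differential graded Lie algebra (DGLA) is encoded as a `K`-module together with an
internal `ℤ`-grading (a family of submodules whose direct sum is the whole module),
a differential of degree `+1` squaring to zero, and a bracket which is graded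
skew-symmetric, satisfies the graded Jacobi identity and the graded Leibniz rule.
-/

universe u v w

/-- A `ℤ`-graded cochain complex structure on a `K`-module `V`: an internal grading
together with a differential of degree `+1` squaring to zero. -/
structure CochainStruct (K : Type u) [Field K] (V : Type v) [AddCommGroup V] [Module K V] :
    Type (max u v) where
  grading : ℤ → Submodule K V
  isInternal : DirectSum.IsInternal grading
  d : V →ₗ[K] V
  d_degree : ∀ i : ℤ, ∀ x ∈ grading i, d x ∈ grading (i + 1)
  d_sq : ∀ x : V, d (d x) = 0

namespace CochainStruct

variable {K : Type u} [Field K] {V : Type v} [AddCommGroup V] [Module K V]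
  {W : Type w} [AddCommGroup W] [Module K W]

/-- Degree `i` cocycles. -/
def cocycles (c : CochainStruct K V) (i : ℤ) : Submodule K V :=
  c.grading i ⊓ LinearMap.ker c.d

/-- Degree `i` coboundaries, as a submodule of the degree `i` cocycles. -/
def coboundaries (c : CochainStruct K V) (i : ℤ) : Submodule K (c.cocycles i) :=
  Submodule.comap (c.cocycles i).subtype (c.grading i ⊓ LinearMap.range c.d)

/-- The degree `i` cohomology of a graded cochain complex. -/
def cohomology (c : CochainStruct K V) (i : ℤ) : Type v :=
  c.cocycles i ⧸ c.coboundaries i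

instance (c : CochainStruct K V) (i : ℤ) : AddCommGroup (c.cohomology i) :=
  inferInstanceAs (AddCommGroup (c.cocycles i ⧸ c.coboundaries i))

instance (c : CochainStruct K V) (i : ℤ) : Module K (c.cohomology i) :=
  inferInstanceAs (Module K (c.cocycles i ⧸ c.coboundaries i))

end CochainStruct

/-- A (degree zero) morphism of graded cochain complexes. -/
structure CochainMap {K : Type u} [Field K] {V : Type v} {W : Type w}
    [AddCommGroup V] [Module K V] [AddCommGroup W] [Module K W]
    (c : CochainStruct K V) (c' : CochainStruct K W) : Type (max u v w) where
  toFun : V →ₗ[K] W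
  map_grading : ∀ i : ℤ, ∀ x ∈ c.grading i, toFun x ∈ c'.grading i
  map_d : ∀ x : V, toFun (c.d x) = c'.d (toFun x)

namespace CochainMap

variable {K : Type u} [Field K] {V : Type v} {W : Type w}
  [AddCommGroup V] [Module K V] [AddCommGroup W] [Module K W]
  {c : CochainStruct K V} {c' : CochainStruct K W}

/-- The induced map on cocycles. -/
def cocyclesMap (f : CochainMap c c') (i : ℤ) : c.cocycles i →ₗ[K] c'.cocycles i :=
  f.toFun.restrict (p := c.cocycles i) (q := c'.cocycles i) fun x hx => by
    rcases Submodule.mem_inf.mp hx with ⟨h1, h2⟩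
    refine Submodule.mem_inf.mpr ⟨f.map_grading i x h1, ?_⟩
    simp only [LinearMap.mem_ker] at h2 ⊢
    rw [← f.map_d, h2, map_zero]

/-- The induced map in cohomology. -/
def cohMap (f : CochainMap c c') (i : ℤ) :
    c.cohomology i →ₗ[K] c'.cohomology i :=
  Submodule.mapQ (c.coboundaries i) (c'.coboundaries i) (f.cocyclesMap i) (by
    rintro ⟨x, hx⟩ hmem
    simp only [CochainStruct.coboundaries, Submodule.mem_comap] at hmem ⊢
    rcases Submodule.mem_inf.mp hmem with ⟨h1, h2⟩
    refine Submodule.mem_inf.mpr ⟨?_, ?_⟩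
    · exact f.map_grading i x h1
    · rcases h2 with ⟨y, hy⟩
      exact ⟨f.toFun y, by
        have := f.map_d y
        simp only [Submodule.coe_subtype] at hy ⊢
        rw [← this, hy]
        rfl⟩)

end CochainMap

/-- A differential graded Lie algebra structure on a `K`-module `L`:
a graded cochain complex together with a degree zero graded bracket which is
graded skew-symmetric and satisfies the graded Jacobi identity and the graded
Leibniz rule. -/
structure DGLAStruct (K : Type u) [Field K] (L : Type v) [AddCommGroup L] [Module K L]
    extends CochainStruct K L where
  bracket : L →ₗ[K] L →ₗ[K] L
  bracket_degree : ∀ i j : ℤ, ∀ x ∈ grading i, ∀ y ∈ grading j, bracket x y ∈ grading (i + j)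
  bracket_skew : ∀ i j : ℤ, ∀ x ∈ grading i, ∀ y ∈ grading j,
    bracket x y = -(((-1 : K) ^ (i * j)) • bracket y x)
  bracket_jacobi : ∀ i j : ℤ, ∀ x ∈ grading i, ∀ y ∈ grading j, ∀ z : L,
    bracket x (bracket y z) =
      bracket (bracket x y) z + ((-1 : K) ^ (i * j)) • bracket y (bracket x z)
  bracket_leibniz : ∀ i : ℤ, ∀ x ∈ grading i, ∀ y : L,
    d (bracket x y) = bracket (d x) y + ((-1 : K) ^ i) • bracket x (d y)

/-- A morphism of differential graded Lie algebras. -/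
structure DGLAStructHom {K : Type u} [Field K] {L : Type v} {M : Type w}
    [AddCommGroup L] [Module K L] [AddCommGroup M] [Module K M]
    (g : DGLAStruct K L) (h : DGLAStruct K M) : Type (max u v w) where
  toFun : L →ₗ[K] M
  map_grading : ∀ i : ℤ, ∀ x ∈ g.grading i, toFun x ∈ h.grading i
  map_d : ∀ x : L, toFun (g.d x) = h.d (toFun x)
  map_bracket : ∀ x y : L, toFun (g.bracket x y) = h.bracket (toFun x) (toFun y)

namespace DGLAStructHom

variable {K : Type u} [Field K] {L : Type v} {M : Type w}
  [AddCommGroup L] [Module K L] [AddCommGroup M] [Module K M]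
  {g : DGLAStruct K L} {h : DGLAStruct K M}

/-- The underlying morphism of complexes of a morphism of DGLAs. -/
def toCochainMap (f : DGLAStructHom g h) :
    CochainMap g.toCochainStruct h.toCochainStruct :=
  ⟨f.toFun, f.map_grading, f.map_d⟩

/-- A quasi-isomorphism of DGLAs is a morphism inducing bijections in cohomology. -/
def IsQuasiIso (f : DGLAStructHom g h) : Prop :=
  ∀ i : ℤ, Function.Bijective (f.toCochainMap.cohMap i)

end DGLAStructHom

/-- A bundled differential graded Lie algebra over `K`. -/
structure DGLA (K : Type u) [Field K] : Type (max u (v + 1)) where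
  carrier : Type v
  [acg : AddCommGroup carrier]
  [mod : Module K carrier]
  str : DGLAStruct K carrier

attribute [instance] DGLA.acg DGLA.mod

namespace DGLA

variable {K : Type u} [Field K]

/-- Two DGLAs are related if there is a quasi-isomorphism from the first to the second. -/
def qisRel : DGLA.{u, v} K → DGLA.{u, v} K → Prop := fun X Y =>
  ∃ f : DGLAStructHom X.str Y.str, f.IsQuasiIso

/-- Homotopy equivalence of DGLAs: the equivalence relation generated by
quasi-isomorphisms. -/
def HomotopyEquiv (X Y : DGLA.{u, v} K) : Prop :=
  Relation.EqvGen qisRel X Y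

/-- A DGLA is abelian if its bracket is trivial. -/
def IsAbelian (X : DGLA.{u, v} K) : Prop :=
  ∀ x y : X.carrier, X.str.bracket x y = 0

/-- A DGLA is homotopy abelian if it is homotopy equivalent (i.e. quasi-isomorphic,
under the equivalence relation generated by quasi-isomorphisms) to an abelian DGLA. -/
def HomotopyAbelian (X : DGLA.{u, v} K) : Prop :=
  ∃ Y : DGLA.{u, v} K, Y.IsAbelian ∧ X.HomotopyEquiv Y

end DGLA

/-- A zig-zag of morphisms of DGLAs (the backwards arrows being quasi-isomorphisms):
a morphism in the homotopy category of DGLAs, i.e. an `L∞` morphism of DGLAs. -/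
inductive ZigZag {K : Type u} [Field K] : DGLA.{u, v} K → DGLA.{u, v} K → Type (max u (v + 1))
  | refl (X : DGLA.{u, v} K) : ZigZag X X
  | fwd {X Y Z : DGLA.{u, v} K} (f : DGLAStructHom X.str Y.str) (t : ZigZag Y Z) : ZigZag X Z
  | bwd {X Y Z : DGLA.{u, v} K} (f : DGLAStructHom Y.str X.str) (hf : f.IsQuasiIso)
      (t : ZigZag Y Z) : ZigZag X Z

/-- The map induced in cohomology by a zig-zag of morphisms of DGLAs. -/
noncomputable def ZigZag.cohMap {K : Type u} [Field K] :
    ∀ {X Y : DGLA.{u, v} K}, ZigZag X Y → ∀ i : ℤ,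
      X.str.toCochainStruct.cohomology i →ₗ[K] Y.str.toCochainStruct.cohomology i
  | _, _, .refl _, _ => LinearMap.id
  | _, _, .fwd f t, i => (t.cohMap i).comp (f.toCochainMap.cohMap i)
  | _, _, .bwd f hf t, i =>
      (t.cohMap i).comp
        ((LinearEquiv.ofBijective (f.toCochainMap.cohMap i) (hf i)).symm.toLinearMap)

/-!
The differential graded vector space `M[t,dt] = M ⊗ K[t,dt]` of polynomial differential
forms on the affine line with coefficients in a DGLA `M`, homotopy fibres, and Cartan
homotopies.  An element of `M[t,dt]` is written `p(t) + q(t) dt` and encoded as the pair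
of coefficient families `(p, q) : (ℕ →₀ M) × (ℕ →₀ M)`.
-/

/-- `M[t,dt]`: polynomial forms on the affine line with coefficients in `M`,
encoded as pairs `(p, q)` with `p(t) + q(t) dt`. -/
abbrev PolyDt (K : Type u) [Field K] (M : Type v) [AddCommGroup M] [Module K M] : Type v :=
  (ℕ →₀ M) × (ℕ →₀ M)

section PolyDt

variable {K : Type u} [Field K] {M : Type v} [AddCommGroup M] [Module K M]

/-- Evaluation at `t = 0`, `dt = 0`. -/
noncomputable def evAt0 : PolyDt K M →ₗ[K] M :=
  (Finsupp.lapply 0).comp (LinearMap.fst K (ℕ →₀ M) (ℕ →₀ M))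

/-- Evaluation at `t = 1`, `dt = 0`. -/
noncomputable def evAt1 : PolyDt K M →ₗ[K] M :=
  ((Finsupp.lsum K fun _ : ℕ => (LinearMap.id : M →ₗ[K] M)) :
      (ℕ →₀ M) →ₗ[K] M).comp (LinearMap.fst K (ℕ →₀ M) (ℕ →₀ M))

/-- The element `t^n m` of `M[t,dt]`. -/
noncomputable def inlP (n : ℕ) (m : M) : PolyDt K M := (Finsupp.single n m, 0)

/-- The element `t^n dt m` of `M[t,dt]`. -/
noncomputable def inrP (n : ℕ) (m : M) : PolyDt K M := (0, Finsupp.single n m)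

/-- The degree `j` part of `M[t,dt]` (with `t` of degree `0` and `dt` of degree `1`). -/
def polyGrading (h : DGLAStruct K M) (j : ℤ) : Submodule K (PolyDt K M) where
  carrier := {x | (∀ n : ℕ, x.1 n ∈ h.grading j) ∧ ∀ n : ℕ, x.2 n ∈ h.grading (j - 1)}
  zero_mem' := ⟨fun n => by simp, fun n => by simp⟩
  add_mem' := by
    rintro x y ⟨hx1, hx2⟩ ⟨hy1, hy2⟩
    refine ⟨fun n => ?_, fun n => ?_⟩
    · have : (x + y).1 n = x.1 n + y.1 n := by simp
      rw [this]; exact (h.grading j).add_mem (hx1 n) (hy1 n)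
    · have : (x + y).2 n = x.2 n + y.2 n := by simp
      rw [this]; exact (h.grading (j - 1)).add_mem (hx2 n) (hy2 n)
  smul_mem' := by
    rintro c x ⟨hx1, hx2⟩
    refine ⟨fun n => ?_, fun n => ?_⟩
    · have : (c • x).1 n = c • x.1 n := by simp
      rw [this]; exact (h.grading j).smul_mem c (hx1 n)
    · have : (c • x).2 n = c • x.2 n := by simp
      rw [this]; exact (h.grading (j - 1)).smul_mem c (hx2 n)

/-- The property that a DGLA structure `mt` on `M[t,dt]` is *the* DGLA of polynomial
forms on the affine line with coefficients in `(M, h)`: it is characterised by its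
grading and by its differential and bracket on the elements `t^n m` and `t^n dt m`. -/
structure IsPolyFormsDGLA (h : DGLAStruct K M) (mt : DGLAStruct K (PolyDt K M)) : Prop where
  grading_eq : ∀ j : ℤ, mt.grading j = polyGrading h j
  d_inl : ∀ (n : ℕ) (m : M), mt.d (inlP n m) = inlP n (h.d m) + inrP (n - 1) (n • m)
  d_inr : ∀ (n : ℕ) (m : M), mt.d (inrP n m) = -inrP n (h.d m)
  bracket_ll : ∀ (n n' : ℕ) (m m' : M),
    mt.bracket (inlP n m) (inlP n' m') = inlP (n + n') (h.bracket m m')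
  bracket_lr : ∀ i : ℤ, ∀ m ∈ h.grading i, ∀ (n n' : ℕ) (m' : M),
    mt.bracket (inlP n m) (inrP n' m') = ((-1 : K) ^ i) • inrP (n + n') (h.bracket m m')
  bracket_rl : ∀ (n n' : ℕ) (m m' : M),
    mt.bracket (inrP n m) (inlP n' m') = inrP (n + n') (h.bracket m m')
  bracket_rr : ∀ (n n' : ℕ) (m m' : M),
    mt.bracket (inrP n m) (inrP n' m') = 0

end PolyDt

section Fibre

variable {K : Type u} [Field K] {L : Type v} {M : Type v}
  [AddCommGroup L] [Module K L] [AddCommGroup M] [Module K M]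

/-- The underlying module of the homotopy fibre
`TW(χ) = { (l, m(t,dt)) ∈ L × M[t,dt] | m(0,0) = 0, m(1,0) = χ(l) }`
of a morphism of DGLAs `χ : L → M`. -/
noncomputable def fibreSub {g : DGLAStruct K L} {h : DGLAStruct K M}
    (χ : DGLAStructHom g h) : Submodule K (L × PolyDt K M) :=
  LinearMap.ker
    ((evAt0.comp (LinearMap.snd K L (PolyDt K M))).prod
      ((evAt1.comp (LinearMap.snd K L (PolyDt K M))) -
        χ.toFun.comp (LinearMap.fst K L (PolyDt K M))))

/-- The property that a DGLA structure `tw` on the module underlying the homotopy fibre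
of `χ : L → M` is *the* homotopy fibre DGLA: differential, bracket and grading are
computed componentwise from `L` and `M[t,dt]`. -/
structure IsHomotopyFibre {g : DGLAStruct K L} {h : DGLAStruct K M}
    (χ : DGLAStructHom g h) (mt : DGLAStruct K (PolyDt K M))
    (tw : DGLAStruct K ↥(fibreSub χ)) : Prop where
  grading_eq : ∀ i : ℤ, tw.grading i =
    Submodule.comap (fibreSub χ).subtype ((g.grading i).prod (mt.grading i))
  d_eq : ∀ v : fibreSub χ, (tw.d v : L × PolyDt K M) =
    (g.d (v : L × PolyDt K M).1, mt.d (v : L × PolyDt K M).2)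
  bracket_eq : ∀ v w : fibreSub χ, (tw.bracket v w : L × PolyDt K M) =
    (g.bracket (v : L × PolyDt K M).1 (w : L × PolyDt K M).1,
      mt.bracket (v : L × PolyDt K M).2 (w : L × PolyDt K M).2)

end Fibre

/-- A Cartan homotopy between differential graded Lie algebras: a degree `-1` linear
map `i : L → M` such that `i_{[a,b]} = [i_a, d_M i_b]` and `[i_a, i_b] = 0`. -/
structure CartanHomotopy {K : Type u} [Field K] {L : Type v} {M : Type w}
    [AddCommGroup L] [Module K L] [AddCommGroup M] [Module K M]
    (g : DGLAStruct K L) (h : DGLAStruct K M) : Type (max u v w) where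
  toFun : L →ₗ[K] M
  map_grading : ∀ i : ℤ, ∀ x ∈ g.grading i, toFun x ∈ h.grading (i - 1)
  cartan_bracket : ∀ a b : L, toFun (g.bracket a b) = h.bracket (toFun a) (h.d (toFun b))
  cartan_square : ∀ a b : L, h.bracket (toFun a) (toFun b) = 0

section Aux

open DirectSum

variable {K : Type u} [Field K]

theorem lofRange_isInternal (H : ℤ → Type u) [∀ i, AddCommGroup (H i)] [∀ i, Module K (H i)] :
    DirectSum.IsInternal (fun i : ℤ => LinearMap.range (DirectSum.lof K ℤ H i)) := by
  classical
  have : DirectSum.Decomposition (fun i : ℤ => LinearMap.range (DirectSum.lof K ℤ H i)) :=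
    DirectSum.Decomposition.ofLinearMap _
      (DirectSum.toModule K ℤ _ (fun i =>
        (DirectSum.lof K ℤ (fun i : ℤ => LinearMap.range (DirectSum.lof K ℤ H i)) i).comp
          (LinearMap.rangeRestrict (DirectSum.lof K ℤ H i))))
      (by
        refine DirectSum.linearMap_ext _ fun i => LinearMap.ext fun x => ?_
        simp [DirectSum.toModule_lof])
      (by
        refine DirectSum.linearMap_ext _ fun i => LinearMap.ext fun x => ?_
        obtain ⟨_, y, rfl⟩ := x
        simp [DirectSum.toModule_lof]
        rfl)
  exact DirectSum.Decomposition.isInternal _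

/-- The abelian DGLA with zero differential on a family of vector spaces. -/
noncomputable def abDGLA (H : ℤ → Type u) [∀ i, AddCommGroup (H i)] [∀ i, Module K (H i)] :
    DGLA.{u, u} K where
  carrier := ⨁ i, H i
  str :=
    { grading := fun i => LinearMap.range (DirectSum.lof K ℤ H i)
      isInternal := lofRange_isInternal H
      d := 0
      d_degree := by intros; simp
      d_sq := by intros; simp
      bracket := 0
      bracket_degree := by intros; simp
      bracket_skew := by intros; simp
      bracket_jacobi := by intros; simp
      bracket_leibniz := by intros; simp }

theorem key (X : DGLA.{u, u} K) (A : Submodule K X.carrier)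
    (hA : ∀ x ∈ A, ∀ y ∈ A, X.str.bracket x y = 0)
    (hs : ∀ i : ℤ, ∀ z ∈ X.str.cocycles i, ∃ a ∈ A, a ∈ X.str.cocycles i ∧
      ∃ w, z - a = X.str.d w) : X.HomotopyAbelian := by
  classical
  let c := X.str.toCochainStruct
  let π : ∀ i, ↥(A ⊓ c.cocycles i) →ₗ[K] c.cohomology i := fun i =>
    (Submodule.mkQ (c.coboundaries i)).comp (Submodule.inclusion inf_le_right)
  have hπ : ∀ i, Function.Surjective (π i) := by
    intro i x
    obtain ⟨⟨z, hz⟩, rfl⟩ := Submodule.mkQ_surjective (c.coboundaries i) x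
    obtain ⟨a, haA, ha, w, hw⟩ := hs i z hz
    refine ⟨⟨a, haA, ha⟩, ?_⟩
    refine Eq.symm ((Submodule.Quotient.eq (c.coboundaries i)).mpr ?_)
    exact ⟨Submodule.sub_mem _ hz.1 ha.1, w, hw.symm⟩
  choose σ hσ using fun i => (π i).exists_rightInverse_of_surjective
    (LinearMap.range_eq_top.mpr (hπ i))
  let Y : DGLA.{u, u} K := abDGLA (fun i => c.cohomology i)
  let Φ : (⨁ i, c.cohomology i) →ₗ[K] X.carrier :=
    DirectSum.toModule K ℤ _ (fun i => (Submodule.subtype _).comp (σ i))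
  have hΦ : ∀ i x, Φ (DirectSum.lof K ℤ (fun i => c.cohomology i) i x) = (σ i x : X.carrier) := by
    intro i x
    simp [Φ, DirectSum.toModule_lof]
  have hΦA : ∀ x, Φ x ∈ A := by
    intro x
    induction x using DirectSum.induction_on with
    | zero => simp
    | of i x => rw [← DirectSum.lof_eq_of K, hΦ]; exact (σ i x).2.1
    | add x y hx hy => rw [map_add]; exact A.add_mem hx hy
  have hΦd : ∀ x, X.str.d (Φ x) = 0 := by
    intro x
    induction x using DirectSum.induction_on with
    | zero => simp
    | of i x => rw [← DirectSum.lof_eq_of K, hΦ]; exact (σ i x).2.2.2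
    | add x y hx hy => rw [map_add, map_add, hx, hy, add_zero]
  have hcl : ∀ i x (hx : (σ i x : X.carrier) ∈ c.cocycles i),
      Submodule.mkQ (c.coboundaries i) ⟨(σ i x : X.carrier), hx⟩ = x := by
    intro i x hx
    exact LinearMap.congr_fun (hσ i) x
  let F : DGLAStructHom Y.str X.str :=
    { toFun := Φ
      map_grading := by
        rintro i _ ⟨x, rfl⟩
        have := (σ i x).2.2.1
        rw [← hΦ] at this; exact this
      map_d := by
        intro x
        exact (map_zero Φ).trans (hΦd x).symm
      map_bracket := by
        intro x y
        exact (map_zero Φ).trans (hA _ (hΦA x) _ (hΦA y)).symm }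
  refine ⟨Y, fun x y => rfl, Relation.EqvGen.symm _ _ (Relation.EqvGen.rel _ _ ⟨F, ?_⟩)⟩
  intro i
  constructor
  · rw [injective_iff_map_eq_zero]
    intro x hx
    obtain ⟨⟨z, hz⟩, rfl⟩ := Submodule.mkQ_surjective (Y.str.coboundaries i) x
    obtain ⟨⟨y, rfl⟩, hz2⟩ := id hz
    have h1 : Submodule.mkQ (c.coboundaries i) ⟨(σ i y : X.carrier), (σ i y).2.2⟩ = 0 := by
      refine Eq.trans ?_ hx
      refine congrArg (Submodule.mkQ (c.coboundaries i)) (Subtype.ext ?_)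
      exact (hΦ i y).symm
    rw [hcl] at h1
    subst h1
    refine Eq.trans (congrArg (Submodule.mkQ (Y.str.coboundaries i))
      (Subtype.ext ?_)) (map_zero (Submodule.mkQ (Y.str.coboundaries i)))
    exact map_zero (DirectSum.lof K ℤ (fun i => c.cohomology i) i)
  · intro x
    refine ⟨Submodule.mkQ (Y.str.coboundaries i)
      ⟨DirectSum.lof K ℤ (fun i => c.cohomology i) i x, ⟨x, rfl⟩, rfl⟩, ?_⟩
    refine Eq.trans ?_ (hcl i x (σ i x).2.2)
    refine congrArg (Submodule.mkQ (c.coboundaries i)) (Subtype.ext ?_)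
    exact hΦ i x

/-- A homogeneous coboundary has a homogeneous primitive. -/
theorem exists_homog_primitive {V : Type v} [AddCommGroup V] [Module K V] (c : CochainStruct K V)
    (i : ℤ) (y : V) (hy : c.d y ∈ c.grading i) :
    ∃ y' ∈ c.grading (i - 1), c.d y' = c.d y := by
  classical
  letI := c.isInternal.chooseDecomposition
  have comm : ∀ x : V, c.d (DirectSum.decompose c.grading x (i - 1) : V) =
      (DirectSum.decompose c.grading (c.d x) i : V) := by
    intro x
    induction x using DirectSum.Decomposition.inductionOn c.grading with
    | zero => simp
    | @homogeneous j m =>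
      have hm := c.d_degree j m m.2
      by_cases hj : j = i - 1
      · subst hj
        rw [sub_add_cancel] at hm
        rw [DirectSum.decompose_of_mem_same _ m.2, DirectSum.decompose_of_mem_same _ hm]
      · rw [DirectSum.decompose_of_mem_ne _ m.2 hj, DirectSum.decompose_of_mem_ne _ hm
          (by omega), map_zero]
    | add x y hx hy => simp [map_add, hx, hy, DirectSum.decompose_add]
  refine ⟨_, (DirectSum.decompose c.grading y (i - 1)).2, ?_⟩
  rw [comm, DirectSum.decompose_of_mem_same _ hy]

variable {M : Type v} [AddCommGroup M] [Module K M] {h : DGLAStruct K M}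
  {mt : DGLAStruct K (PolyDt K M)}

theorem mt_d_inl (hmt : IsPolyFormsDGLA h mt) (p : ℕ →₀ M) :
    (∀ n, (mt.d (p, 0)).1 n = h.d (p n)) ∧
      ∀ n : ℕ, (mt.d (p, 0)).2 n = (n + 1) • p (n + 1) := by
  classical
  induction p using Finsupp.induction_linear with
  | zero =>
    have : ((0, 0) : PolyDt K M) = 0 := rfl
    simp [this]
  | add f g hf hg =>
    have : ((f + g, 0) : PolyDt K M) = (f, 0) + (g, 0) := by simp
    rw [this, map_add]
    refine ⟨fun n => ?_, fun n => ?_⟩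
    · simp [hf.1, hg.1]
    · simp [hf.2, hg.2]
  | single k m =>
    have := hmt.d_inl k m
    simp only [inlP, inrP] at this
    rw [this]
    refine ⟨fun n => ?_, fun n => ?_⟩
    · by_cases hk : k = n <;> simp [Finsupp.single_apply, hk]
    · rcases k with _ | k
      · simp [Finsupp.single_apply]
      · by_cases hk : k = n <;> simp [Finsupp.single_apply, hk]

theorem mt_d_inr (hmt : IsPolyFormsDGLA h mt) (q : ℕ →₀ M) :
    (mt.d (0, q)).1 = 0 ∧ ∀ n : ℕ, (mt.d (0, q)).2 n = - h.d (q n) := by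
  classical
  induction q using Finsupp.induction_linear with
  | zero =>
    have : ((0, 0) : PolyDt K M) = 0 := rfl
    simp [this]
  | add f g hf hg =>
    have : ((0, f + g) : PolyDt K M) = (0, f) + (0, g) := by simp
    rw [this, map_add]
    refine ⟨?_, fun n => ?_⟩
    · simp [hf.1, hg.1]
    · simp [hf.2, hg.2]; abel
  | single k m =>
    have := hmt.d_inr k m
    simp only [inrP] at this
    rw [this]
    refine ⟨by simp, fun n => ?_⟩
    by_cases hk : k = n <;> simp [Finsupp.single_apply, hk]

theorem mt_d (hmt : IsPolyFormsDGLA h mt) (x : PolyDt K M) :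
    (∀ n, (mt.d x).1 n = h.d (x.1 n)) ∧
      ∀ n : ℕ, (mt.d x).2 n = (n + 1) • x.1 (n + 1) - h.d (x.2 n) := by
  obtain ⟨p, q⟩ := x
  have : ((p, q) : PolyDt K M) = (p, 0) + (0, q) := by simp
  rw [this, map_add]
  refine ⟨fun n => ?_, fun n => ?_⟩
  · simp [(mt_d_inl hmt p).1, (mt_d_inr hmt q).1]
  · simp [(mt_d_inl hmt p).2, (mt_d_inr hmt q).2, sub_eq_add_neg]

/-- Termwise integration of polynomials vanishing at `0`. -/
noncomputable def integ : (ℕ →₀ M) →ₗ[K] (ℕ →₀ M) :=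
  Finsupp.lsum K fun n : ℕ => ((n + 1 : K)⁻¹) • Finsupp.lsingle (n + 1)

theorem integ_zero (q : ℕ →₀ M) : integ (K := K) q 0 = 0 := by
  classical
  induction q using Finsupp.induction_linear with
  | zero => simp
  | add f g hf hg => simp [hf, hg]
  | single k m => simp [integ]

theorem integ_succ (q : ℕ →₀ M) (n : ℕ) : integ (K := K) q (n + 1) = ((n + 1 : K)⁻¹) • q n := by
  classical
  induction q using Finsupp.induction_linear with
  | zero => simp
  | add f g hf hg => simp [hf, hg]
  | single k m =>
    by_cases hk : k = n <;> simp [integ, Finsupp.single_apply, hk]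

/-- Evaluation of a polynomial at `1`. -/
noncomputable def ev1 : (ℕ →₀ M) →ₗ[K] M :=
  Finsupp.lsum K fun _ : ℕ => (LinearMap.id : M →ₗ[K] M)

theorem ev1_mem (S : Submodule K M) (p : ℕ →₀ M) (hp : ∀ n, p n ∈ S) : ev1 (K := K) p ∈ S := by
  simp only [ev1, Finsupp.lsum_apply, Finsupp.sum]
  exact S.sum_mem fun n _ => hp n

theorem ev1_map (f : M →ₗ[K] M) (p p' : ℕ →₀ M) (hp : ∀ n, p' n = f (p n)) :
    f (ev1 (K := K) p) = ev1 (K := K) p' := by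
  have : p' = Finsupp.mapRange.linearMap f p := by ext n; simp [hp]
  rw [this]
  simp only [ev1, Finsupp.lsum_apply, LinearMap.id_apply]
  rw [Finsupp.mapRange.linearMap_apply, Finsupp.sum_mapRange_index (by simp), map_finsuppSum]
  rfl

end Aux

/-- Let `χ : L → M` be an injective morphism of differential graded
Lie algebras over a field `K` of characteristic `0` such that the induced map
`H^*(L) → H^*(M)` is injective.  Then the homotopy fibre
`TW(χ) = { (l, m(t,dt)) ∈ L × M[t,dt] : m(0,0) = 0, m(1,0) = χ(l) }`
is a homotopy abelian DGLA.  (Here `mt` is the DGLA of polynomial forms `M[t,dt]` and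
`tw` the componentwise DGLA structure on the homotopy fibre.) -/
theorem homotopy_fibre_homotopy_abelian {K : Type u} [Field K] [CharZero K]
    {L M : Type u} [AddCommGroup L] [Module K L] [AddCommGroup M] [Module K M]
    {g : DGLAStruct K L} {h : DGLAStruct K M} (χ : DGLAStructHom g h)
    (hχ : Function.Injective χ.toFun)
    (hH : ∀ i : ℤ, Function.Injective (χ.toCochainMap.cohMap i))
    (mt : DGLAStruct K (PolyDt K M)) (hmt : IsPolyFormsDGLA h mt)
    (tw : DGLAStruct K ↥(fibreSub χ)) (htw : IsHomotopyFibre χ mt tw) :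
    DGLA.HomotopyAbelian (DGLA.mk (K := K) ↥(fibreSub χ) tw) := by
  classical
  have hmem : ∀ (l : L) (p q : ℕ →₀ M), ((l, (p, q)) : L × PolyDt K M) ∈ fibreSub χ ↔
      p 0 = 0 ∧ ev1 (K := K) p = χ.toFun l := by
    intro l p q
    rw [← sub_eq_zero (a := ev1 (K := K) p), ← Prod.mk_eq_zero]
    exact Iff.rfl
  let ι : M →ₗ[K] ↥(fibreSub χ) := LinearMap.codRestrict _
    ((LinearMap.inr K L (PolyDt K M)).comp
      ((LinearMap.inr K (ℕ →₀ M) (ℕ →₀ M)).comp (Finsupp.lsingle 0)))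
    (fun m => (hmem _ _ _).mpr (by simp))
  have hι : ∀ m, (ι m : L × PolyDt K M) = (0, inrP 0 m) := fun m => rfl
  refine key _ (LinearMap.range ι) ?_ ?_
  · rintro _ ⟨m, rfl⟩ _ ⟨m', rfl⟩
    refine Subtype.ext ((htw.bracket_eq _ _).trans ?_)
    rw [hι, hι]
    simp [hmt.bracket_rr]
  · rintro i ⟨⟨l, p, q⟩, hz⟩ ⟨hzg, hzd⟩
    obtain ⟨hp0, hp1⟩ := (hmem _ _ _).mp hz
    have hzg' := hzg
    simp only [htw.grading_eq, Submodule.mem_comap, hmt.grading_eq] at hzg'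
    obtain ⟨hl, hp, hq⟩ := hzg'
    change l ∈ g.grading i at hl
    change ∀ n, p n ∈ h.grading i at hp
    change ∀ n, q n ∈ h.grading (i - 1) at hq
    have hd := htw.d_eq ⟨(l, p, q), hz⟩
    have hzd' : tw.d ⟨(l, p, q), hz⟩ = 0 := hzd
    rw [hzd'] at hd
    have hdl : g.d l = 0 := (congrArg Prod.fst hd).symm
    have hdm : mt.d (p, q) = 0 := (congrArg Prod.snd hd).symm
    have hrel : ∀ n : ℕ, (n + 1) • p (n + 1) = h.d (q n) := by
      intro n
      have := (mt_d hmt (p, q)).2 n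
      rw [hdm] at this
      exact sub_eq_zero.mp this.symm
    have hne : ∀ n : ℕ, (n + 1 : K) ≠ 0 := fun n => by exact_mod_cast Nat.succ_ne_zero n
    let P := integ (K := K) q
    have hdP : ∀ n, p n = h.d (P n) := by
      intro n
      rcases n with _ | n
      · simp [P, integ_zero, hp0]
      · simp only [P]
        rw [integ_succ, map_smul, ← hrel, ← Nat.cast_smul_eq_nsmul K, smul_smul]
        push_cast
        rw [inv_mul_cancel₀ (hne n), one_smul]
    have hPg : ∀ n, P n ∈ h.grading (i - 1) := by
      intro n
      rcases n with _ | n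
      · simp [P, integ_zero]
      · simp only [P]
        rw [integ_succ]
        exact Submodule.smul_mem _ _ (hq n)
    have hdP1 : h.d (ev1 (K := K) P) = χ.toFun l := by
      rw [ev1_map h.d P p hdP, hp1]
    obtain ⟨y, hy⟩ : ∃ y, g.d y = l := by
      have h0 : Submodule.mkQ (g.coboundaries i) ⟨l, hl, hdl⟩ = 0 := by
        refine (injective_iff_map_eq_zero _).mp (hH i) _ ?_
        refine (Submodule.Quotient.mk_eq_zero (h.coboundaries i)).mpr ?_
        exact ⟨χ.map_grading i l hl, _, hdP1⟩
      exact ((Submodule.Quotient.mk_eq_zero (g.coboundaries i)).mp h0).2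
    obtain ⟨l', hl', hdl'⟩ := exists_homog_primitive g.toCochainStruct i y (by rw [hy]; exact hl)
    rw [hy] at hdl'
    let c : M := χ.toFun l' - ev1 (K := K) P
    have hc : h.d c = 0 := by
      simp only [c]
      rw [map_sub, hdP1, ← χ.map_d, hdl', sub_self]
    have hcg : c ∈ h.grading (i - 1) :=
      Submodule.sub_mem _ (χ.map_grading _ _ hl') (ev1_mem _ _ hPg)
    let w : ↥(fibreSub χ) := ⟨(l', (P + Finsupp.single 1 c, 0)), (hmem _ _ _).mpr ⟨by
      simp [P, integ_zero], by
      rw [map_add, show ev1 (K := K) (Finsupp.single 1 c) = c by simp [ev1]]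
      exact add_sub_cancel _ _⟩⟩
    refine ⟨ι (-c), ⟨_, rfl⟩, ⟨?_, ?_⟩, w, ?_⟩
    · simp only [htw.grading_eq, Submodule.mem_comap, hmt.grading_eq]
      refine ⟨Submodule.zero_mem _, fun n => Submodule.zero_mem _, fun n => ?_⟩
      change Finsupp.single 0 (-c) n ∈ _
      rw [Finsupp.single_apply]
      split_ifs
      · exact Submodule.neg_mem _ hcg
      · exact Submodule.zero_mem _
    · refine Subtype.ext ((htw.d_eq _).trans ?_)
      rw [hι]
      change (g.d 0, mt.d (inrP 0 (-c))) = (0 : L × PolyDt K M)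
      rw [hmt.d_inr, map_neg, hc, map_zero]
      simp [inrP]
    · refine Subtype.ext (Eq.trans ?_ (htw.d_eq w).symm)
      have e := mt_d hmt (P + Finsupp.single 1 c, 0)
      refine Prod.ext ?_ (Prod.ext ?_ ?_)
      · change l - 0 = g.d l'
        rw [hdl', sub_zero]
      · ext n
        refine Eq.trans ?_ (e.1 n).symm
        change (p - 0) n = h.d (P n + Finsupp.single 1 c n)
        rw [sub_zero, map_add, ← hdP, Finsupp.single_apply]
        split_ifs <;> simp [hc]
      · ext n
        refine Eq.trans ?_ (e.2 n).symm
        change (q - Finsupp.single 0 (-c) : ℕ →₀ M) n = (n + 1) • (P (n+1) + Finsupp.single 1 c (n+1)) -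
          h.d 0
        simp only [P]
        rw [integ_succ, map_zero, sub_zero, smul_add, ← Nat.cast_smul_eq_nsmul K, smul_smul]
        push_cast
        rw [mul_inv_cancel₀ (hne n), one_smul]
        rcases n with _ | n <;> simp [Finsupp.single_apply]
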